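/- Consider a smooth solution of the Bianchi I Einstein–Vlasov system on [t₀,∞) with expanding initial data (H(t₀) < 0) and f₀ not identically zero. There exists ε₀ > 0 such that if F(t₀) ≤ ε₀ and P(t₀) ≤ ε₀, then for every ε > 0 there is a constant C_ε > 0 such that the supremum of the particle momenta satisfies P(t) ≤ C_ε t^{-2/3 + ε} for all large t; in particular P(t) → 0, so the solution is asymptotically dust-like. -/

import Mathlib

/-!
The threshold used is `ε₀ = min (1/72) (m/9)`: although the order of quantifiers would allow `ε₀` to
depend on the whole solution, it depends only on the particle mass.

Write `F` for the anisotropy, `|σ|² = F H²`, and let `x = ∫ f₀ |p|² / (m² ∫ f₀)`, a smooth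
substitute for `P² / m²` with `tr S ≤ x ρ`. The evolution equations, the constraint and the
Cauchy–Schwarz bound `|σ^{ab} p_a p_b| ≤ |σ| |p|²` (`sq_quad_le`) give, with `h = -H > 0`,

* `F' ≤ h (-F + 3 F² / 2 + x F / 3 + 2 x √F / 3)`,
* `q' ≤ -2 h (1/3 - √F) q` for `q = x` and for `q = |p|²` with any fixed covariant `p`,
* `1/2 ≤ θ' ≤ 1/2 + F + x` for `θ = -1/H`

(`BianchiIVlasov.scalarSys`, `ScalarSys`). For small data `V = F + x` is a Lyapunov function with
`V' ≤ -h V / 6`, so that `V θ^{1/6}` does not increase; as `θ ≥ (t - t₀)/2`, `V` tends to `0`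
(`ScalarSys.V_tendsto`). Once `V` is small, `q' ≤ -(2/3 - 2δ) q / θ` and `θ' ≤ 1/2 + δ²`, so `q θ^a`
does not increase for any prescribed `a < 4/3` (`ScalarSys.decay`). Applied to every momentum in the
support of `f₀` and combined with `θ ≥ t/4` at late times, this gives `P = O(t^{-a/2})`.
-/

open Matrix MeasureTheory

attribute [local instance] Matrix.normedAddCommGroup Matrix.normedSpace

/-- The energy density `ρ` of collisionless matter with distribution function `f₀`
(in covariant momentum components) on a spatial metric `g`. -/
noncomputable def energyDensity (m : ℝ) (f₀ : (Fin 3 → ℝ) → ℝ)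
    (g : Matrix (Fin 3) (Fin 3) ℝ) : ℝ :=
  ∫ p : Fin 3 → ℝ, f₀ p * Real.sqrt (m ^ 2 + p ⬝ᵥ g⁻¹.mulVec p) / Real.sqrt g.det

/-- The spatial stress tensor `S_{ab}` (with lower indices). -/
noncomputable def stress (m : ℝ) (f₀ : (Fin 3 → ℝ) → ℝ)
    (g : Matrix (Fin 3) (Fin 3) ℝ) : Matrix (Fin 3) (Fin 3) ℝ :=
  Matrix.of fun a b => ∫ p : Fin 3 → ℝ,
    f₀ p * p a * p b / (Real.sqrt (m ^ 2 + p ⬝ᵥ g⁻¹.mulVec p) * Real.sqrt g.det)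

/-- The mean curvature `H = tr (g⁻¹ k)`. -/
noncomputable def meanCurv (g k : Matrix (Fin 3) (Fin 3) ℝ) : ℝ := (g⁻¹ * k).trace

/-- The shear `σ = k - (H/3) g`, the trace-free part of the second fundamental form. -/
noncomputable def shear (g k : Matrix (Fin 3) (Fin 3) ℝ) : Matrix (Fin 3) (Fin 3) ℝ :=
  k - (meanCurv g k / 3) • g

/-- The anisotropy `F = σ_{ab} σ^{ab} / H²`. -/
noncomputable def anisotropy (g k : Matrix (Fin 3) (Fin 3) ℝ) : ℝ :=
  (g⁻¹ * shear g k * g⁻¹ * shear g k).trace / meanCurv g k ^ 2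

/-- `P`, the supremum of the absolute values of the momenta on the support of `f₀`. -/
noncomputable def momentumSup (f₀ : (Fin 3 → ℝ) → ℝ)
    (g : Matrix (Fin 3) (Fin 3) ℝ) : ℝ :=
  sSup ((fun p => Real.sqrt (p ⬝ᵥ g⁻¹.mulVec p)) '' {p | f₀ p ≠ 0})

/-- A smooth solution of the Bianchi I Einstein–Vlasov system on `[t₀, ∞)`
(Gaussian time, zero cosmological constant, particle mass `m > 0`). -/
structure BianchiIVlasov (t₀ m : ℝ) (g k : ℝ → Matrix (Fin 3) (Fin 3) ℝ)
    (f₀ : (Fin 3 → ℝ) → ℝ) : Prop where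
  m_pos : 0 < m
  g_smooth : ContDiffOn ℝ (⊤ : ℕ∞) g (Set.Ici t₀)
  k_smooth : ContDiffOn ℝ (⊤ : ℕ∞) k (Set.Ici t₀)
  f₀_smooth : ContDiff ℝ (⊤ : ℕ∞) f₀
  f₀_nonneg : ∀ p, 0 ≤ f₀ p
  f₀_cpt : HasCompactSupport f₀
  g_posdef : ∀ t ≥ t₀, (g t).PosDef
  g_symm : ∀ t ≥ t₀, (g t).IsSymm
  k_symm : ∀ t ≥ t₀, (k t).IsSymm
  evol_g : ∀ t ≥ t₀, HasDerivWithinAt g (-(2 : ℝ) • k t) (Set.Ici t₀) t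
  evol_k : ∀ t ≥ t₀, HasDerivWithinAt k
    (meanCurv (g t) (k t) • k t - (2 : ℝ) • (k t * (g t)⁻¹ * k t)
      - (8 * Real.pi) • (stress m f₀ (g t)
          - (((g t)⁻¹ * stress m f₀ (g t)).trace / 2) • g t)
      - (4 * Real.pi * energyDensity m f₀ (g t)) • g t) (Set.Ici t₀) t
  constraint : ∀ t ≥ t₀,
    meanCurv (g t) (k t) ^ 2 - ((g t)⁻¹ * k t * (g t)⁻¹ * k t).trace
      = 16 * Real.pi * energyDensity m f₀ (g t)

/-! ### Entrywise calculus of matrix curves -/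

/-- `A` has derivative `A'` at `t` within `s`, entry by entry. Working entrywise keeps the product
rule independent of any choice of (submultiplicative) matrix norm. -/
def MDeriv (A : ℝ → Matrix (Fin 3) (Fin 3) ℝ) (A' : Matrix (Fin 3) (Fin 3) ℝ) (s : Set ℝ)
    (t : ℝ) : Prop := ∀ i j, HasDerivWithinAt (fun τ => A τ i j) (A' i j) s t

theorem MDeriv.of_hasDeriv {A : ℝ → Matrix (Fin 3) (Fin 3) ℝ} {A' : Matrix (Fin 3) (Fin 3) ℝ}
    {s : Set ℝ} {t : ℝ} (h : HasDerivWithinAt A A' s t) : MDeriv A A' s t := fun i j =>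
  hasDerivWithinAt_pi.1 (hasDerivWithinAt_pi.1 h i) j

theorem MDeriv.mul {A B : ℝ → Matrix (Fin 3) (Fin 3) ℝ} {A' B' : Matrix (Fin 3) (Fin 3) ℝ}
    {s : Set ℝ} {t : ℝ} (hA : MDeriv A A' s t) (hB : MDeriv B B' s t) :
    MDeriv (fun τ => A τ * B τ) (A' * B t + A t * B') s t := by
  intro i j
  simp only [Matrix.mul_apply, Matrix.add_apply, ← Finset.sum_add_distrib]
  exact HasDerivWithinAt.fun_sum fun k _ => (hA i k).mul (hB k j)

theorem MDeriv.trace {A : ℝ → Matrix (Fin 3) (Fin 3) ℝ} {A' : Matrix (Fin 3) (Fin 3) ℝ}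
    {s : Set ℝ} {t : ℝ} (hA : MDeriv A A' s t) :
    HasDerivWithinAt (fun τ => (A τ).trace) A'.trace s t := by
  simp only [Matrix.trace, Matrix.diag]
  exact HasDerivWithinAt.fun_sum fun k _ => hA k k

/-- `(A⁻¹)' = -A⁻¹ A' A⁻¹`. The entries of `A⁻¹` are differentiable by Cramer's rule, and the
value of the derivative follows from differentiating `A⁻¹ A = 1`. -/
theorem MDeriv.inv {A : ℝ → Matrix (Fin 3) (Fin 3) ℝ} {A' : Matrix (Fin 3) (Fin 3) ℝ}
    {s : Set ℝ} {t : ℝ} (hu : UniqueDiffWithinAt ℝ s t) (hts : t ∈ s)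
    (hdet : ∀ τ ∈ s, (A τ).det ≠ 0) (hA : MDeriv A A' s t) :
    MDeriv (fun τ => (A τ)⁻¹) (-((A t)⁻¹ * A' * (A t)⁻¹)) s t := by
  have hd : ∀ i j, DifferentiableWithinAt ℝ (fun τ => A τ i j) s t :=
    fun i j => (hA i j).differentiableWithinAt
  have hdd : DifferentiableWithinAt ℝ (fun τ => (A τ).det) s t := by
    simp only [Matrix.det_fin_three]; fun_prop
  have hI : ∀ i j, DifferentiableWithinAt ℝ (fun τ => (A τ)⁻¹ i j) s t := by
    intro i j
    simp only [Matrix.inv_def, Ring.inverse_eq_inv', Matrix.smul_apply, smul_eq_mul]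
    refine (hdd.inv (hdet t hts)).mul ?_
    simp only [Matrix.adjugate_fin_three]
    fin_cases i <;> fin_cases j <;> simp <;> fun_prop
  let D : Matrix (Fin 3) (Fin 3) ℝ := Matrix.of fun i j => derivWithin (fun τ => (A τ)⁻¹ i j) s t
  have hD : MDeriv (fun τ => (A τ)⁻¹) D s t := fun i j => (hI i j).hasDerivWithinAt
  have hprod := hD.mul hA
  have hzero : D * A t + (A t)⁻¹ * A' = 0 := by
    ext i j
    refine hu.eq_deriv _ (hprod i j) ?_
    refine (hasDerivWithinAt_const t s ((1 : Matrix (Fin 3) (Fin 3) ℝ) i j)).congr_of_mem ?_ hts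
    intro τ hτ
    simp only [Matrix.nonsing_inv_mul _ (hdet τ hτ).isUnit]
  have hDe : D = -((A t)⁻¹ * A' * (A t)⁻¹) := by
    calc D = (D * A t) * (A t)⁻¹ := by
            rw [Matrix.mul_assoc, Matrix.mul_nonsing_inv _ (hdet t hts).isUnit, Matrix.mul_one]
      _ = _ := by rw [eq_neg_of_add_eq_zero_left hzero, Matrix.neg_mul]
  exact hDe ▸ hD

/-! ### The pointwise shear inequality -/

open scoped MatrixOrder Matrix.Norms.L2Operator in
theorem exists_gram {A : Matrix (Fin 3) (Fin 3) ℝ} (hA : A.PosSemidef) :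
    ∃ B : Matrix (Fin 3) (Fin 3) ℝ, A = Bᵀ * B := by
  obtain ⟨B, hB⟩ := CStarAlgebra.nonneg_iff_eq_star_mul_self.mp hA.nonneg
  exact ⟨B, by rw [hB, Matrix.star_eq_conjTranspose, Matrix.conjTranspose_eq_transpose_of_trivial]⟩

/-- `|σ^{ab} p_a p_b| ≤ |σ|_g |p|_g²`. With `g⁻¹ = Bᵀ B` this is Cauchy–Schwarz for the symmetric
matrix `B σ Bᵀ` against the rank-one matrix with entries `w i * w j`, where `w = B p`. -/
theorem sq_quad_le {g σ : Matrix (Fin 3) (Fin 3) ℝ} (hg : g.PosDef) (hσ : σ.IsSymm)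
    (p : Fin 3 → ℝ) :
    0 ≤ (g⁻¹ * σ * g⁻¹ * σ).trace ∧
    |p ⬝ᵥ (g⁻¹ * σ * g⁻¹) *ᵥ p| ≤
      Real.sqrt (g⁻¹ * σ * g⁻¹ * σ).trace * (p ⬝ᵥ g⁻¹ *ᵥ p) := by
  obtain ⟨B, hB⟩ := exists_gram hg.inv.posSemidef
  set M := B * σ * Bᵀ with hM
  have hMs : ∀ i j, M j i = M i j := by
    have : M.IsSymm := by
      simp [Matrix.IsSymm, hM, Matrix.transpose_mul, hσ.eq, Matrix.mul_assoc]
    exact fun i j => this.apply i j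
  set w := B *ᵥ p with hw
  have htr : (g⁻¹ * σ * g⁻¹ * σ).trace = ∑ i, ∑ j, M i j ^ 2 := by
    rw [hB]
    have : (Bᵀ * B * σ * (Bᵀ * B) * σ).trace = (M * M).trace := by
      rw [show Bᵀ * B * σ * (Bᵀ * B) * σ = Bᵀ * (B * σ * Bᵀ * B * σ) by
        simp only [Matrix.mul_assoc], Matrix.trace_mul_comm]
      simp only [hM, Matrix.mul_assoc]
    rw [this]
    simp only [Matrix.trace, Matrix.diag, Matrix.mul_apply]
    refine Finset.sum_congr rfl fun i _ => Finset.sum_congr rfl fun j _ => ?_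
    rw [hMs i j]; ring
  have hq : p ⬝ᵥ g⁻¹ *ᵥ p = ∑ i, w i ^ 2 := by
    rw [hB, ← Matrix.mulVec_mulVec, Matrix.dotProduct_mulVec, Matrix.vecMul_transpose]
    simp [dotProduct, hw, sq]
  have hk : p ⬝ᵥ (g⁻¹ * σ * g⁻¹) *ᵥ p = ∑ i, ∑ j, M i j * (w i * w j) := by
    rw [hB, show Bᵀ * B * σ * (Bᵀ * B) = Bᵀ * (M * B) by simp only [hM, Matrix.mul_assoc],
      ← Matrix.mulVec_mulVec, Matrix.dotProduct_mulVec, Matrix.vecMul_transpose,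
      ← Matrix.mulVec_mulVec, ← hw]
    clear_value w
    simp only [dotProduct, Matrix.mulVec, Finset.mul_sum]
    exact Finset.sum_congr rfl fun i _ => Finset.sum_congr rfl fun j _ => by ring
  clear_value w M
  have h0 : 0 ≤ ∑ i, ∑ j, M i j ^ 2 :=
    Finset.sum_nonneg fun i _ => Finset.sum_nonneg fun j _ => sq_nonneg _
  have h1 : 0 ≤ ∑ i, w i ^ 2 := Finset.sum_nonneg fun i _ => sq_nonneg _
  refine ⟨htr ▸ h0, ?_⟩
  rw [htr, hq, hk]
  refine abs_le_of_sq_le_sq ?_ (mul_nonneg (Real.sqrt_nonneg _) h1)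
  rw [mul_pow, Real.sq_sqrt h0]
  have hcs := Finset.sum_mul_sq_le_sq_mul_sq (Finset.univ : Finset (Fin 3 × Fin 3))
    (fun x => M x.1 x.2) (fun x => w x.1 * w x.2)
  simp only [Fintype.sum_prod_type] at hcs
  refine hcs.trans_eq ?_
  congr 1
  simp only [sq (∑ i, w i ^ 2), Finset.sum_mul_sum, mul_pow]

theorem quad_nonneg {g : Matrix (Fin 3) (Fin 3) ℝ} (hg : g.PosDef) (p : Fin 3 → ℝ) :
    0 ≤ p ⬝ᵥ g⁻¹ *ᵥ p := by
  simpa using hg.inv.posSemidef.dotProduct_mulVec_nonneg p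

/-! ### The scalar differential inequalities -/

theorem le_of_deriv_nonpos {f f' : ℝ → ℝ} {a : ℝ}
    (hf : ∀ t ≥ a, HasDerivWithinAt f (f' t) (Set.Ici a) t) (hf' : ∀ t ≥ a, f' t ≤ 0) :
    ∀ t ≥ a, f t ≤ f a := by
  have key : AntitoneOn f (Set.Ici a) := by
    refine antitoneOn_of_deriv_nonpos (convex_Ici a)
      (fun t ht => (hf t ht).continuousWithinAt) ?_ ?_
    · intro t ht
      rw [interior_Ici] at ht ⊢
      exact ((hf t ht.le).mono Set.Ioi_subset_Ici_self).differentiableWithinAt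
    · intro t ht
      rw [interior_Ici] at ht
      rw [((hf t ht.le).hasDerivAt (Ici_mem_nhds ht)).deriv]
      exact hf' t ht.le
  exact fun t ht => key (Set.mem_Ici.2 le_rfl) ht ht

/-- The closed scalar system satisfied by a solution: `H` is the mean curvature,
`s = σ_{ab} σ^{ab}`,
`ρ` the energy density, `r = tr S`, `z = S_{ab} σ^{ab}`, and `x` is a smooth quantity which
controls `r / ρ` and evolves (with derivative `x'`) like the square of a momentum. -/
structure ScalarSys (t₀ : ℝ) (H s x ρ r z x' : ℝ → ℝ) : Prop where
  dH : ∀ t ≥ t₀, HasDerivWithinAt H (H t ^ 2 + 4 * Real.pi * r t - 12 * Real.pi * ρ t)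
    (Set.Ici t₀) t
  ds : ∀ t ≥ t₀, HasDerivWithinAt s (2 * H t * s t - 16 * Real.pi * z t) (Set.Ici t₀) t
  dx : ∀ t ≥ t₀, HasDerivWithinAt x (x' t) (Set.Ici t₀) t
  dx_le : ∀ t ≥ t₀, x' t ≤ 2 * (H t / 3 + Real.sqrt (s t)) * x t
  con : ∀ t ≥ t₀, 2 / 3 * H t ^ 2 - s t = 16 * Real.pi * ρ t
  s_nonneg : ∀ t ≥ t₀, 0 ≤ s t
  x_nonneg : ∀ t ≥ t₀, 0 ≤ x t
  ρ_pos : ∀ t ≥ t₀, 0 < ρ t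
  r_nonneg : ∀ t ≥ t₀, 0 ≤ r t
  r_le : ∀ t ≥ t₀, r t ≤ x t * ρ t
  z_le : ∀ t ≥ t₀, |z t| ≤ Real.sqrt (s t) * r t
  H_neg₀ : H t₀ < 0

namespace ScalarSys

variable {t₀ : ℝ} {H s x ρ r z x' : ℝ → ℝ}

/-- Expansion never stops: the constraint and `ρ > 0` force `H ≠ 0`. -/
theorem H_neg (S : ScalarSys t₀ H s x ρ r z x') : ∀ t ≥ t₀, H t < 0 := by
  intro t ht
  by_contra! hcon
  have hc : ContinuousOn H (Set.Icc t₀ t) := fun τ hτ =>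
    (S.dH τ hτ.1).continuousWithinAt.mono Set.Icc_subset_Ici_self
  obtain ⟨τ, hτ, h0⟩ := intermediate_value_Icc ht hc ⟨S.H_neg₀.le, hcon⟩
  have h1 := S.con τ hτ.1
  have h2 := S.s_nonneg τ hτ.1
  have h3 := mul_pos Real.pi_pos (S.ρ_pos τ hτ.1)
  rw [h0] at h1
  nlinarith

/-- Expansion-normalised variables: `u = |σ| / |H|` is the square root of the anisotropy, while
`y = 16π r / H²` and `ζ = -16π z / H³` are the normalised matter terms. -/
theorem normalised (S : ScalarSys t₀ H s x ρ r z x') {t : ℝ} (ht : t ≥ t₀) :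
    ∃ u y ζ : ℝ, 0 ≤ u ∧ 0 ≤ y ∧ u ^ 2 ≤ 2 / 3 ∧ y ≤ x t * (2 / 3 - u ^ 2) ∧ |ζ| ≤ y * u ∧
      s t = u ^ 2 * H t ^ 2 ∧ Real.sqrt (s t) = -(u * H t) ∧ s t / H t ^ 2 = u ^ 2 ∧
      16 * Real.pi * r t = y * H t ^ 2 ∧ 16 * Real.pi * z t = -(ζ * H t ^ 3) ∧
      16 * Real.pi * ρ t = (2 / 3 - u ^ 2) * H t ^ 2 := by
  have hH := S.H_neg t ht
  have hH0 : H t ≠ 0 := hH.ne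
  have hH2 : 0 < H t ^ 2 := sq_pos_of_neg hH
  have hpi := Real.pi_pos
  have hs := S.s_nonneg t ht
  have hsq := Real.sq_sqrt hs
  have hu2 : (Real.sqrt (s t) / (-H t)) ^ 2 = s t / H t ^ 2 := by
    rw [div_pow, hsq, neg_sq]
  have hcon := S.con t ht
  have hρ := mul_pos hpi (S.ρ_pos t ht)
  have hu3 : 16 * Real.pi * ρ t = (2 / 3 - s t / H t ^ 2) * H t ^ 2 := by
    rw [← hcon, sub_mul, div_mul_cancel₀ _ hH2.ne']
  refine ⟨Real.sqrt (s t) / (-H t), 16 * Real.pi * r t / H t ^ 2,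
    -(16 * Real.pi * z t / H t ^ 3), div_nonneg (Real.sqrt_nonneg _) (by linarith),
    by have := S.r_nonneg t ht; positivity, ?_, ?_, ?_, ?_, ?_, hu2.symm, ?_, ?_, ?_⟩
  · rw [hu2, div_le_iff₀ hH2]; linarith
  · rw [hu2, div_le_iff₀ hH2, mul_assoc (x t), ← hu3]
    have := mul_le_mul_of_nonneg_left (S.r_le t ht) hpi.le
    linarith
  · have e : 16 * Real.pi * r t / H t ^ 2 * (Real.sqrt (s t) / (-H t)) =
        16 * Real.pi * (Real.sqrt (s t) * r t) / |H t ^ 3| := by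
      rw [abs_pow, abs_of_neg hH]; field_simp
    rw [e, abs_neg, abs_div, abs_mul, abs_of_pos (by positivity : 0 < 16 * Real.pi)]
    gcongr
    exact S.z_le t ht
  · rw [hu2]; field_simp
  · field_simp [hH.ne]
  · field_simp
  · field_simp [hH.ne]
  · rw [hu2]; exact hu3

/-- `V = F + x` is a Lyapunov function near `0`: `V' ≤ -|H| V / 6` wherever `V ≤ 1/36`. To
leading order `F' = -|H| F` and `x' = -(2/3) |H| x`. -/
theorem dV (S : ScalarSys t₀ H s x ρ r z x') {t : ℝ} (ht : t ≥ t₀) :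
    ∃ V' : ℝ, HasDerivWithinAt (fun τ => s τ / H τ ^ 2 + x τ) V' (Set.Ici t₀) t ∧
      (s t / H t ^ 2 + x t ≤ 1 / 36 → V' ≤ H t / 6 * (s t / H t ^ 2 + x t)) := by
  have hH := S.H_neg t ht
  refine ⟨_, ((S.ds t ht).fun_div ((S.dH t ht).fun_pow 2) (sq_pos_of_neg hH).ne').fun_add
    (S.dx t ht),
    fun hV => ?_⟩
  obtain ⟨u, y, ζ, hu, hy, hu2, hyx, hζ, hs, hss, hF, hr, hz, hρ⟩ := S.normalised ht
  have hx0 := S.x_nonneg t ht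
  have hdx := S.dx_le t ht
  have hH0 : H t ≠ 0 := hH.ne
  rw [hF] at hV ⊢
  rw [hss] at hdx
  have e : ((2 * H t * s t - 16 * Real.pi * z t) * H t ^ 2 -
      s t * ((2 : ℕ) * H t ^ (2 - 1) * (H t ^ 2 + 4 * Real.pi * r t - 12 * Real.pi * ρ t))) /
      (H t ^ 2) ^ 2 = H t * (2 * u ^ 2 + ζ - 2 * u ^ 2 * (1 / 2 + y / 4 + 3 / 4 * u ^ 2)) := by
    rw [hz, show H t ^ 2 + 4 * Real.pi * r t - 12 * Real.pi * ρ t =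
      (1 / 2 + y / 4 + 3 / 4 * u ^ 2) * H t ^ 2 by linarith, hs]
    field_simp
    push_cast
    ring
  rw [e]
  have hu6 : u ≤ 1 / 6 := by nlinarith
  have hx6 : x t ≤ 1 / 36 := by nlinarith
  have hy1 : y ≤ 2 / 3 * x t := by nlinarith
  have hζ1 := (abs_le.1 hζ).1
  have hyu : y * u ≤ 1 / 9 * x t := by nlinarith
  have hyu2 : u ^ 2 * y ≤ u ^ 2 * (1 / 54) := by gcongr; linarith
  have hu4 : u ^ 2 * u ^ 2 ≤ u ^ 2 * (1 / 36) := by gcongr; nlinarith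
  have hxu : u * x t ≤ 1 / 6 * x t := by gcongr
  have key : 1 / 6 * (u ^ 2 + x t) ≤
      (2 * u ^ 2 + ζ - 2 * u ^ 2 * (1 / 2 + y / 4 + 3 / 4 * u ^ 2))
        + 2 * (1 / 3 - u) * x t := by
    nlinarith
  nlinarith

/-- The region `V ≤ 1/36` is forward invariant, as `V' < 0` on its boundary. -/
theorem V_le (S : ScalarSys t₀ H s x ρ r z x') (h0 : s t₀ / H t₀ ^ 2 + x t₀ ≤ 1 / 36) :
    ∀ t ≥ t₀, s t / H t ^ 2 + x t ≤ 1 / 36 := by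
  choose! V' hV' hb using fun t (ht : t ≥ t₀) => S.dV ht
  intro t ht
  refine image_le_of_deriv_right_lt_deriv_boundary' (f := fun τ => s τ / H τ ^ 2 + x τ)
    (f' := V') (B := fun _ => 1 / 36) (B' := fun _ => 0) (a := t₀) (b := t)
    (fun τ hτ => (hV' τ hτ.1).continuousWithinAt.mono Set.Icc_subset_Ici_self)
    (fun τ hτ => (hV' τ hτ.1).mono (Set.Ici_subset_Ici.2 hτ.1)) h0 continuousOn_const
    (fun τ _ => hasDerivWithinAt_const _ _ _) (fun τ hτ he => ?_) ⟨ht, le_rfl⟩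
  have h1 := hb τ hτ.1 he.le
  have h2 := S.H_neg τ hτ.1
  change s τ / H τ ^ 2 + x τ = 1 / 36 at he
  rw [he] at h1
  linarith

/-- `θ = -1/H` grows with a slope between `1/2` and `1/2 + V`; it plays the role of time. -/
theorem dθ (S : ScalarSys t₀ H s x ρ r z x') {t : ℝ} (ht : t ≥ t₀) :
    ∃ θ' : ℝ, HasDerivWithinAt (fun τ => (-H τ)⁻¹) θ' (Set.Ici t₀) t ∧ 1 / 2 ≤ θ' ∧
      θ' ≤ 1 / 2 + s t / H t ^ 2 + x t := by
  have hH := S.H_neg t ht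
  refine ⟨_, (S.dH t ht).fun_neg.fun_inv (by linarith), ?_⟩
  obtain ⟨u, y, ζ, hu, hy, hu2, hyx, hζ, hs, hss, hF, hr, hz, hρ⟩ := S.normalised ht
  have hx0 := S.x_nonneg t ht
  have hH0 : H t ≠ 0 := hH.ne
  have e : - -(H t ^ 2 + 4 * Real.pi * r t - 12 * Real.pi * ρ t) / (-H t) ^ 2 =
      1 / 2 + y / 4 + 3 / 4 * u ^ 2 := by
    rw [show H t ^ 2 + 4 * Real.pi * r t - 12 * Real.pi * ρ t =
      (1 / 2 + y / 4 + 3 / 4 * u ^ 2) * H t ^ 2 by linarith]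
    field_simp
  rw [e, hF]
  constructor <;> nlinarith

theorem le_θ (S : ScalarSys t₀ H s x ρ r z x') {T t : ℝ} (hT : t₀ ≤ T) (ht : T ≤ t) :
    (t - T) / 2 ≤ (-H t)⁻¹ := by
  choose! θ' hθ' h1 h2 using fun t (ht : t ≥ t₀) => S.dθ ht
  have h := le_of_deriv_nonpos (f := fun τ => (τ - T) / 2 - (-H τ)⁻¹) (a := T)
    (f' := fun τ => 1 / 2 - θ' τ)
    (fun τ hτ => ((((hasDerivAt_id τ).sub_const T).div_const 2).hasDerivWithinAt).fun_sub
      ((hθ' τ (hT.trans hτ)).mono (Set.Ici_subset_Ici.2 hT)))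
    (fun τ hτ => by linarith [h1 τ (hT.trans hτ)]) t ht
  have := inv_pos.2 (neg_pos.2 (S.H_neg T hT))
  linarith

/-- If `q' ≤ -c |H| q` and `a θ' ≤ c`, then `q θ^a` is non-increasing, because `|H| = 1/θ`. -/
theorem weighted (S : ScalarSys t₀ H s x ρ r z x') {T a c : ℝ} (hT : t₀ ≤ T) (ha : 0 ≤ a)
    {q q' : ℝ → ℝ} (hq : ∀ t ≥ T, HasDerivWithinAt q (q' t) (Set.Ici T) t)
    (hq0 : ∀ t ≥ T, 0 ≤ q t) (hq' : ∀ t ≥ T, q' t ≤ c * H t * q t)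
    (hac : ∀ t ≥ T, a * (1 / 2 + s t / H t ^ 2 + x t) ≤ c) :
    ∀ t ≥ T, q t * (-H t)⁻¹ ^ a ≤ q T * (-H T)⁻¹ ^ a := by
  choose! θ' hθ' h1 h2 using fun t (ht : t ≥ t₀) => S.dθ ht
  have hθpos : ∀ t ≥ T, 0 < (-H t)⁻¹ := fun t ht =>
    inv_pos.2 (neg_pos.2 (S.H_neg t (hT.trans ht)))
  refine le_of_deriv_nonpos (f := fun t => q t * (-H t)⁻¹ ^ a)
    (fun t ht => (hq t ht).fun_mul
      (((hθ' t (hT.trans ht)).mono (Set.Ici_subset_Ici.2 hT)).rpow_const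
        (Or.inl (hθpos t ht).ne'))) ?_
  intro t ht
  have hθ := hθpos t ht
  have hH := S.H_neg t (hT.trans ht)
  have e : (-H t)⁻¹ ^ (a - 1) = (-H t)⁻¹ ^ a * (-H t) := by
    rw [Real.rpow_sub hθ, Real.rpow_one, div_inv_eq_mul]
  rw [e]
  have hb : a * θ' t ≤ c := (mul_le_mul_of_nonneg_left (h2 t (hT.trans ht)) ha).trans (hac t ht)
  have hp : 0 < (-H t)⁻¹ ^ a := Real.rpow_pos_of_pos hθ a
  have h3 : q' t + q t * (-H t) * (a * θ' t) ≤ 0 := by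
    have := mul_le_mul_of_nonneg_left hb (mul_nonneg (hq0 t ht) (neg_pos.2 hH).le)
    nlinarith [hq' t ht]
  nlinarith

/-- `V = O(θ^{-1/6})` and `θ ≥ (t - t₀)/2`, so the anisotropy and `x` tend to zero. -/
theorem V_tendsto (S : ScalarSys t₀ H s x ρ r z x') (h0 : s t₀ / H t₀ ^ 2 + x t₀ ≤ 1 / 36) :
    Filter.Tendsto (fun t => s t / H t ^ 2 + x t) Filter.atTop (nhds 0) := by
  have hVle := S.V_le h0
  have hV0 : ∀ t ≥ t₀, 0 ≤ s t / H t ^ 2 + x t := fun t ht =>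
    add_nonneg (div_nonneg (S.s_nonneg t ht) (sq_nonneg _)) (S.x_nonneg t ht)
  choose! V' hV' hb using fun t (ht : t ≥ t₀) => S.dV ht
  have hw := S.weighted (a := 1 / 6) (c := 1 / 6) le_rfl (by norm_num) hV' hV0
    (fun t ht => (hb t ht (hVle t ht)).trans_eq (by ring))
    (fun t ht => by linarith [hVle t ht])
  set C := (s t₀ / H t₀ ^ 2 + x t₀) * (-H t₀)⁻¹ ^ (1 / 6 : ℝ)
  have hC : 0 ≤ C := mul_nonneg (hV0 t₀ le_rfl)
    (Real.rpow_nonneg (inv_pos.2 (neg_pos.2 S.H_neg₀)).le _)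
  have hθtop : Filter.Tendsto (fun t => (-H t)⁻¹) Filter.atTop Filter.atTop := by
    refine Filter.tendsto_atTop_mono' _ ?_
      ((Filter.tendsto_atTop_add_const_right _ (-t₀) Filter.tendsto_id).atTop_div_const two_pos)
    filter_upwards [Filter.eventually_ge_atTop t₀] with t ht
    exact S.le_θ le_rfl ht
  have hlim : Filter.Tendsto (fun t => C * (-H t)⁻¹ ^ (-(1 / 6) : ℝ)) Filter.atTop (nhds 0) := by
    simpa using ((tendsto_rpow_neg_atTop (by norm_num : (0 : ℝ) < 1 / 6)).comp hθtop).const_mul C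
  refine squeeze_zero' ?_ ?_ hlim
  · filter_upwards [Filter.eventually_ge_atTop t₀] with t ht using hV0 t ht
  · filter_upwards [Filter.eventually_ge_atTop t₀] with t ht
    have hθ : 0 < (-H t)⁻¹ := inv_pos.2 (neg_pos.2 (S.H_neg t ht))
    rw [Real.rpow_neg hθ.le, ← div_eq_mul_inv, le_div_iff₀ (Real.rpow_pos_of_pos hθ _)]
    exact hw t ht

/-- Every nonnegative `q` that evolves like the square of a momentum satisfies `q = O(θ^{-a})` for
each `a < 4/3`, from a time `T` on that does not depend on `q`. -/
theorem decay (S : ScalarSys t₀ H s x ρ r z x') (h0 : s t₀ / H t₀ ^ 2 + x t₀ ≤ 1 / 36)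
    {a : ℝ} (ha : 0 ≤ a) (ha' : a < 4 / 3) :
    ∃ T ≥ t₀, ∀ q q' : ℝ → ℝ, (∀ t ≥ t₀, HasDerivWithinAt q (q' t) (Set.Ici t₀) t) →
      (∀ t ≥ t₀, 0 ≤ q t) → (∀ t ≥ t₀, q' t ≤ 2 * (H t / 3 + Real.sqrt (s t)) * q t) →
      ∀ t ≥ T, q t * (-H t)⁻¹ ^ a ≤ q T * (-H T)⁻¹ ^ a := by
  have hlim := S.V_tendsto h0
  -- `V < δ²` gives `u ≤ δ` and `θ' ≤ 1/2 + δ²`; this `δ` makes `a (1/2 + δ²) ≤ 2 (1/3 - δ)`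
  set δ : ℝ := (4 / 3 - a) / 8 with hδ
  have hδ0 : 0 < δ := by rw [hδ]; linarith
  have hδ1 : δ ≤ 1 / 6 := by rw [hδ]; linarith
  obtain ⟨T₁, hT₁⟩ := Filter.eventually_atTop.1
    (hlim.eventually (gt_mem_nhds (show (0 : ℝ) < δ ^ 2 by positivity)))
  refine ⟨max t₀ T₁, le_max_left _ _, fun q q' hq hq0 hq' => ?_⟩
  have hT : t₀ ≤ max t₀ T₁ := le_max_left _ _
  have hV : ∀ t ≥ max t₀ T₁, s t / H t ^ 2 + x t < δ ^ 2 :=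
    fun t ht => hT₁ t ((le_max_right _ _).trans ht)
  refine S.weighted (c := 2 * (1 / 3 - δ)) hT ha
    (fun t ht => (hq t (hT.trans ht)).mono (Set.Ici_subset_Ici.2 hT))
    (fun t ht => hq0 t (hT.trans ht)) (fun t ht => ?_) (fun t ht => ?_)
  · have ht' := hT.trans ht
    obtain ⟨u, y, ζ, hu, hy, hu2, hyx, hζ, hs, hss, hF, hr, hz, hρ⟩ := S.normalised ht'
    have hH := S.H_neg t ht'
    have h1 := hV t ht
    have hx0 := S.x_nonneg t ht'
    rw [hF] at h1
    have hud : u ≤ δ := by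
      by_contra! hcon
      nlinarith
    refine (hq' t ht').trans (mul_le_mul_of_nonneg_right ?_ (hq0 t ht'))
    rw [hss]
    nlinarith
  · have h1 := hV t ht
    have h2 : a * (1 / 2 + s t / H t ^ 2 + x t) ≤ a * (1 / 2 + δ ^ 2) := by
      exact mul_le_mul_of_nonneg_left (by linarith) ha
    refine h2.trans ?_
    have : a = 4 / 3 - 8 * δ := by rw [hδ]; ring
    have h3 : a * δ ^ 2 ≤ 4 / 3 * (δ * (1 / 6)) := by
      rw [sq]; gcongr
    linarith

end ScalarSys

/-! ### Matter integrals -/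

/-- The matrix `∫ w(p) p_a p_b dp` of second moments of a weight `w`. For `w = f₀` it is constant
in time. -/
noncomputable def moment (w : (Fin 3 → ℝ) → ℝ) : Matrix (Fin 3) (Fin 3) ℝ :=
  Matrix.of fun a b => ∫ p : Fin 3 → ℝ, w p * p a * p b

theorem continuous_quad (M : Matrix (Fin 3) (Fin 3) ℝ) :
    Continuous fun p : Fin 3 → ℝ => p ⬝ᵥ M *ᵥ p :=
  continuous_id.dotProduct (continuous_const.matrix_mulVec continuous_id)

theorem integrable_mul {w v : (Fin 3 → ℝ) → ℝ} (hw : Continuous w) (hc : HasCompactSupport w)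
    (hv : Continuous v) : Integrable fun p => w p * v p :=
  (hw.mul hv).integrable_of_hasCompactSupport hc.mul_right

theorem trace_mul_moment {w : (Fin 3 → ℝ) → ℝ} (hw : Continuous w) (hc : HasCompactSupport w)
    (M : Matrix (Fin 3) (Fin 3) ℝ) :
    (M * moment w).trace = ∫ p : Fin 3 → ℝ, w p * (p ⬝ᵥ M *ᵥ p) := by
  have hInt : ∀ i j : Fin 3, Integrable fun p : Fin 3 → ℝ => M i j * (w p * p j * p i) := by
    intro i j
    have := (integrable_mul hw hc (v := fun p => p j * p i) (by fun_prop)).const_mul (M i j)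
    simpa only [mul_assoc] using this
  simp only [Matrix.trace, Matrix.diag, Matrix.mul_apply, moment, Matrix.of_apply,
    ← integral_const_mul]
  rw [Finset.sum_congr rfl fun i _ => (integral_finsetSum Finset.univ fun j _ => hInt i j).symm,
    ← integral_finsetSum Finset.univ fun i _ => integrable_finsetSum _ fun j _ => hInt i j]
  congr 1
  ext p
  simp only [dotProduct, Matrix.mulVec, Finset.mul_sum]
  exact Finset.sum_congr rfl fun i _ => Finset.sum_congr rfl fun j _ => by ring

theorem MDeriv.quad {A : ℝ → Matrix (Fin 3) (Fin 3) ℝ} {A' : Matrix (Fin 3) (Fin 3) ℝ}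
    {s : Set ℝ} {t : ℝ} (hA : MDeriv A A' s t) (p : Fin 3 → ℝ) :
    HasDerivWithinAt (fun τ => p ⬝ᵥ A τ *ᵥ p) (p ⬝ᵥ A' *ᵥ p) s t := by
  simp only [dotProduct, Matrix.mulVec]
  exact HasDerivWithinAt.fun_sum fun i _ => (HasDerivWithinAt.fun_sum fun j _ =>
    (hA i j).mul_const (p j)).const_mul (p i)

theorem trace_inv_mul (g k : Matrix (Fin 3) (Fin 3) ℝ) : (g⁻¹ * k).trace = meanCurv g k := rfl

theorem shear_symm {g k : Matrix (Fin 3) (Fin 3) ℝ} (hg : g.IsSymm) (hk : k.IsSymm) :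
    (shear g k).IsSymm := hk.sub (hg.smul _)

theorem inv_mul_shear {g k : Matrix (Fin 3) (Fin 3) ℝ} (hg : g.det ≠ 0) :
    g⁻¹ * shear g k = g⁻¹ * k - (meanCurv g k / 3) • (1 : Matrix (Fin 3) (Fin 3) ℝ) := by
  rw [shear, Matrix.mul_sub, Matrix.mul_smul, Matrix.nonsing_inv_mul _ hg.isUnit]

/-- `σ_{ab} σ^{ab} = k_{ab} k^{ab} - H²/3`. -/
theorem shear_sq {g k : Matrix (Fin 3) (Fin 3) ℝ} (hg : g.det ≠ 0) :
    (g⁻¹ * shear g k * g⁻¹ * shear g k).trace =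
      ((g⁻¹ * k) * (g⁻¹ * k)).trace - meanCurv g k ^ 2 / 3 := by
  rw [Matrix.mul_assoc _ g⁻¹, inv_mul_shear hg]
  simp only [Matrix.sub_mul, Matrix.mul_sub, Matrix.smul_mul, Matrix.mul_smul, Matrix.one_mul,
    Matrix.mul_one, Matrix.trace_sub, Matrix.trace_smul, Matrix.trace_one, Fintype.card_fin,
    smul_eq_mul, trace_inv_mul]
  push_cast
  ring

/-- `k^{ab} p_a p_b ≤ (H/3 + |σ|) |p|²`, which bounds the growth rate of momenta. -/
theorem quad_k_le {g k : Matrix (Fin 3) (Fin 3) ℝ} (hg : g.PosDef) (hgs : g.IsSymm)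
    (hk : k.IsSymm) (p : Fin 3 → ℝ) :
    p ⬝ᵥ (g⁻¹ * k * g⁻¹) *ᵥ p ≤ (meanCurv g k / 3 +
      Real.sqrt (g⁻¹ * shear g k * g⁻¹ * shear g k).trace) * (p ⬝ᵥ g⁻¹ *ᵥ p) := by
  have h := (abs_le.1 (sq_quad_le hg (shear_symm hgs hk) p).2).2
  generalize Real.sqrt (g⁻¹ * shear g k * g⁻¹ * shear g k).trace = r at h ⊢
  rw [inv_mul_shear hg.det_pos.ne', Matrix.sub_mul, Matrix.smul_mul, Matrix.one_mul,
    Matrix.sub_mulVec, Matrix.smul_mulVec, dotProduct_sub, dotProduct_smul, smul_eq_mul,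
    sub_le_iff_le_add] at h
  linarith

section Matter

variable {m : ℝ} {f₀ : (Fin 3 → ℝ) → ℝ} {g : Matrix (Fin 3) (Fin 3) ℝ}

theorem le_energy (hg : g.PosDef) (p : Fin 3 → ℝ) :
    m ≤ Real.sqrt (m ^ 2 + p ⬝ᵥ g⁻¹ *ᵥ p) :=
  Real.le_sqrt_of_sq_le (by linarith [quad_nonneg hg p])

/-- The weight whose second moments are the components of the stress tensor. -/
noncomputable def stressWeight (m : ℝ) (f₀ : (Fin 3 → ℝ) → ℝ) (g : Matrix (Fin 3) (Fin 3) ℝ)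
    (p : Fin 3 → ℝ) : ℝ :=
  f₀ p * (Real.sqrt (m ^ 2 + p ⬝ᵥ g⁻¹ *ᵥ p) * Real.sqrt g.det)⁻¹

theorem stress_eq_moment : stress m f₀ g = moment (stressWeight m f₀ g) := by
  ext a b
  simp only [stress, moment, stressWeight, Matrix.of_apply]
  congr 1
  ext p
  rw [div_eq_mul_inv]
  ring

theorem continuous_energy : Continuous fun p : Fin 3 → ℝ =>
    Real.sqrt (m ^ 2 + p ⬝ᵥ g⁻¹ *ᵥ p) :=
  (continuous_const.add (continuous_quad _)).sqrt

theorem continuous_stressFactor (hm : 0 < m) (hg : g.PosDef) : Continuous fun p : Fin 3 → ℝ =>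
    (Real.sqrt (m ^ 2 + p ⬝ᵥ g⁻¹ *ᵥ p) * Real.sqrt g.det)⁻¹ :=
  (continuous_energy.mul continuous_const).inv₀ fun p =>
    (mul_pos (hm.trans_le (le_energy hg p)) (Real.sqrt_pos.2 hg.det_pos)).ne'

theorem stressWeight_nonneg (h0 : ∀ p, 0 ≤ f₀ p) (p : Fin 3 → ℝ) : 0 ≤ stressWeight m f₀ g p :=
  mul_nonneg (h0 p) (inv_nonneg.2 (mul_nonneg (Real.sqrt_nonneg _) (Real.sqrt_nonneg _)))

theorem trace_mul_stress (hm : 0 < m) (hf : Continuous f₀) (hc : HasCompactSupport f₀)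
    (hg : g.PosDef) (M : Matrix (Fin 3) (Fin 3) ℝ) :
    (M * stress m f₀ g).trace = ∫ p : Fin 3 → ℝ, stressWeight m f₀ g p * (p ⬝ᵥ M *ᵥ p) := by
  rw [stress_eq_moment]
  exact trace_mul_moment (hf.mul (continuous_stressFactor hm hg)) hc.mul_right M

theorem integrable_stress (hm : 0 < m) (hf : Continuous f₀) (hc : HasCompactSupport f₀)
    (hg : g.PosDef) (M : Matrix (Fin 3) (Fin 3) ℝ) :
    Integrable fun p : Fin 3 → ℝ => stressWeight m f₀ g p * (p ⬝ᵥ M *ᵥ p) :=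
  integrable_mul (hf.mul (continuous_stressFactor hm hg)) hc.mul_right (continuous_quad M)

theorem pressure_nonneg (hm : 0 < m) (hf : Continuous f₀) (hc : HasCompactSupport f₀)
    (h0 : ∀ p, 0 ≤ f₀ p) (hg : g.PosDef) : 0 ≤ (g⁻¹ * stress m f₀ g).trace := by
  rw [trace_mul_stress hm hf hc hg]
  exact integral_nonneg fun p => mul_nonneg (stressWeight_nonneg h0 p) (quad_nonneg hg p)

theorem mass_pos (hf : Continuous f₀) (hc : HasCompactSupport f₀)
    (h0 : ∀ p, 0 ≤ f₀ p) (hne : f₀ ≠ 0) : 0 < ∫ p, f₀ p := by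
  obtain ⟨p, hp⟩ := Function.ne_iff.1 hne
  exact hf.integral_pos_of_hasCompactSupport_nonneg_nonzero hc h0 hp

theorem mass_le_energyDensity (hf : Continuous f₀) (hc : HasCompactSupport f₀)
    (h0 : ∀ p, 0 ≤ f₀ p) (hg : g.PosDef) :
    m * (∫ p, f₀ p) / Real.sqrt g.det ≤ energyDensity m f₀ g := by
  have hd := Real.sqrt_pos.2 hg.det_pos
  rw [energyDensity, integral_div]
  gcongr
  rw [← integral_const_mul]
  refine integral_mono ((hf.integrable_of_hasCompactSupport hc).const_mul m)
    (integrable_mul hf hc continuous_energy) fun p => ?_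
  have := mul_le_mul_of_nonneg_left (le_energy (m := m) hg p) (h0 p)
  simp only
  linarith

/-- `tr S ≤ (m √det g)⁻¹ ∫ f₀ |p|²`, from bounding the particle energy below by `m`. -/
theorem pressure_le (hm : 0 < m) (hf : Continuous f₀) (hc : HasCompactSupport f₀)
    (h0 : ∀ p, 0 ≤ f₀ p) (hg : g.PosDef) :
    (g⁻¹ * stress m f₀ g).trace ≤ (g⁻¹ * moment f₀).trace / (m * Real.sqrt g.det) := by
  have hd := Real.sqrt_pos.2 hg.det_pos
  rw [trace_mul_stress hm hf hc hg, trace_mul_moment hf hc, ← integral_div]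
  refine integral_mono (integrable_stress hm hf hc hg _)
    ((integrable_mul hf hc (continuous_quad _)).div_const _) fun p => ?_
  simp only [stressWeight]
  rw [div_eq_mul_inv, mul_right_comm]
  have h1 := quad_nonneg hg p
  have h2 := le_energy (m := m) hg p
  have h3 := h0 p
  gcongr

theorem stress_shear_le (hm : 0 < m) (hf : Continuous f₀) (hc : HasCompactSupport f₀)
    (h0 : ∀ p, 0 ≤ f₀ p) (hg : g.PosDef) {σ : Matrix (Fin 3) (Fin 3) ℝ} (hσ : σ.IsSymm) :
    |(g⁻¹ * σ * g⁻¹ * stress m f₀ g).trace| ≤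
      Real.sqrt (g⁻¹ * σ * g⁻¹ * σ).trace * (g⁻¹ * stress m f₀ g).trace := by
  rw [trace_mul_stress hm hf hc hg, trace_mul_stress hm hf hc hg, ← integral_const_mul]
  refine (abs_integral_le_integral_abs).trans (integral_mono
    (integrable_stress hm hf hc hg _).abs ((integrable_stress hm hf hc hg _).const_mul _)
    fun p => ?_)
  simp only
  rw [abs_mul, abs_of_nonneg (stressWeight_nonneg h0 p)]
  have := mul_le_mul_of_nonneg_left (sq_quad_le hg hσ p).2
    (stressWeight_nonneg (m := m) (g := g) h0 p)
  linarith

theorem momentumSup_bdd (hc : HasCompactSupport f₀) :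
    BddAbove ((fun p => Real.sqrt (p ⬝ᵥ g⁻¹.mulVec p)) '' {p | f₀ p ≠ 0}) :=
  ((IsCompact.image hc (continuous_quad g⁻¹).sqrt).bddAbove).mono
    (Set.image_mono (subset_tsupport f₀))

theorem momentumSup_nonneg : 0 ≤ momentumSup f₀ g :=
  Real.sSup_nonneg (by rintro _ ⟨p, _, rfl⟩; exact Real.sqrt_nonneg _)

theorem quad_le_momentumSup (hc : HasCompactSupport f₀) (hg : g.PosDef) {p : Fin 3 → ℝ}
    (hp : f₀ p ≠ 0) : p ⬝ᵥ g⁻¹ *ᵥ p ≤ momentumSup f₀ g ^ 2 := by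
  have h : Real.sqrt (p ⬝ᵥ g⁻¹ *ᵥ p) ≤ momentumSup f₀ g :=
    le_csSup (momentumSup_bdd hc) ⟨p, hp, rfl⟩
  rw [← Real.sq_sqrt (quad_nonneg hg p)]
  exact pow_le_pow_left₀ (Real.sqrt_nonneg _) h 2

theorem trace_moment_le (hf : Continuous f₀) (hc : HasCompactSupport f₀)
    (h0 : ∀ p, 0 ≤ f₀ p) (hg : g.PosDef) :
    (g⁻¹ * moment f₀).trace ≤ momentumSup f₀ g ^ 2 * ∫ p, f₀ p := by
  rw [trace_mul_moment hf hc, ← integral_const_mul]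
  refine integral_mono (integrable_mul hf hc (continuous_quad _))
    ((hf.integrable_of_hasCompactSupport hc).const_mul _) fun p => ?_
  simp only
  rcases eq_or_ne (f₀ p) 0 with hp | hp
  · simp [hp]
  · rw [mul_comm]
    exact mul_le_mul_of_nonneg_right (quad_le_momentumSup hc hg hp) (h0 p)

end Matter

/-! ### Solutions of the Einstein–Vlasov system -/

namespace BianchiIVlasov

variable {t₀ m : ℝ} {g k : ℝ → Matrix (Fin 3) (Fin 3) ℝ} {f₀ : (Fin 3 → ℝ) → ℝ}

theorem dInv (hsol : BianchiIVlasov t₀ m g k f₀) {t : ℝ} (ht : t ≥ t₀) :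
    MDeriv (fun τ => (g τ)⁻¹) ((2 : ℝ) • ((g t)⁻¹ * k t * (g t)⁻¹)) (Set.Ici t₀) t := by
  have h := (MDeriv.of_hasDeriv (hsol.evol_g t ht)).inv (uniqueDiffOn_Ici t₀ t ht) ht
    fun τ hτ => (hsol.g_posdef τ hτ).det_pos.ne'
  simpa [Matrix.mul_smul, Matrix.smul_mul] using h

/-- Evolution of the mixed second fundamental form `K = g⁻¹ k`, in which the terms quadratic in
`k` other than `H K` cancel. -/
theorem dK (hsol : BianchiIVlasov t₀ m g k f₀) {t : ℝ} (ht : t ≥ t₀) :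
    MDeriv (fun τ => (g τ)⁻¹ * k τ)
      (meanCurv (g t) (k t) • ((g t)⁻¹ * k t) - (8 * Real.pi) • ((g t)⁻¹ * stress m f₀ (g t)) +
        (4 * Real.pi * ((g t)⁻¹ * stress m f₀ (g t)).trace
          - 4 * Real.pi * energyDensity m f₀ (g t)) • (1 : Matrix (Fin 3) (Fin 3) ℝ))
      (Set.Ici t₀) t := by
  have h := (hsol.dInv ht).mul (MDeriv.of_hasDeriv (hsol.evol_k t ht))
  have hg := Matrix.nonsing_inv_mul _ (hsol.g_posdef t ht).det_pos.ne'.isUnit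
  convert h using 1
  simp only [Matrix.mul_sub, Matrix.smul_mul, Matrix.mul_smul, hg, ← Matrix.mul_assoc]
  module

/-- The quantity `x = ∫ f₀ |p|² / (m² ∫ f₀)` dominates `tr S / ρ` and is at most `P² / m²`. Unlike
`P` it is differentiable, and since it is linear in `g⁻¹` its derivative requires no
differentiation under the integral sign. -/
theorem scalarSys (hsol : BianchiIVlasov t₀ m g k f₀) (hexp : meanCurv (g t₀) (k t₀) < 0)
    (hf₀ : f₀ ≠ 0) :
    ScalarSys t₀ (fun t => meanCurv (g t) (k t))
      (fun t => ((g t)⁻¹ * shear (g t) (k t) * (g t)⁻¹ * shear (g t) (k t)).trace)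
      (fun t => ((g t)⁻¹ * moment f₀).trace / (m ^ 2 * ∫ p, f₀ p))
      (fun t => energyDensity m f₀ (g t))
      (fun t => ((g t)⁻¹ * stress m f₀ (g t)).trace)
      (fun t => ((g t)⁻¹ * shear (g t) (k t) * (g t)⁻¹ * stress m f₀ (g t)).trace)
      (fun t => 2 * ((g t)⁻¹ * k t * (g t)⁻¹ * moment f₀).trace / (m ^ 2 * ∫ p, f₀ p)) := by
  have hm := hsol.m_pos
  have hf := hsol.f₀_smooth.continuous
  have hc := hsol.f₀_cpt
  have h0 := hsol.f₀_nonneg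
  have hN := mass_pos hf hc h0 hf₀
  have hdet : ∀ t ≥ t₀, (g t).det ≠ 0 := fun t ht => (hsol.g_posdef t ht).det_pos.ne'
  have dH : ∀ t ≥ t₀, HasDerivWithinAt (fun t => meanCurv (g t) (k t))
      (meanCurv (g t) (k t) ^ 2 + 4 * Real.pi * ((g t)⁻¹ * stress m f₀ (g t)).trace
        - 12 * Real.pi * energyDensity m f₀ (g t)) (Set.Ici t₀) t := by
    intro t ht
    have h : HasDerivWithinAt (fun t => meanCurv (g t) (k t)) _ (Set.Ici t₀) t :=
      (hsol.dK ht).trace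
    convert h using 1
    simp only [Matrix.trace_add, Matrix.trace_sub, Matrix.trace_smul, Matrix.trace_one,
      Fintype.card_fin, smul_eq_mul, trace_inv_mul]
    push_cast
    ring
  have hρ : ∀ t ≥ t₀, 0 < energyDensity m f₀ (g t) := fun t ht =>
    lt_of_lt_of_le (div_pos (mul_pos hm hN) (Real.sqrt_pos.2 (hsol.g_posdef t ht).det_pos))
      (mass_le_energyDensity hf hc h0 (hsol.g_posdef t ht))
  refine
    { dH := dH
      ds := fun t ht => ?_
      dx := fun t ht => ?_
      dx_le := fun t ht => ?_
      con := fun t ht => ?_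
      s_nonneg := fun t ht => (sq_quad_le (hsol.g_posdef t ht)
        (shear_symm (hsol.g_symm t ht) (hsol.k_symm t ht)) 0).1
      x_nonneg := fun t ht => ?_
      ρ_pos := hρ
      r_nonneg := fun t ht => pressure_nonneg hm hf hc h0 (hsol.g_posdef t ht)
      r_le := fun t ht => ?_
      z_le := fun t ht => stress_shear_le hm hf hc h0 (hsol.g_posdef t ht)
        (shear_symm (hsol.g_symm t ht) (hsol.k_symm t ht))
      H_neg₀ := hexp }
  · have h := ((hsol.dK ht).mul (hsol.dK ht)).trace.fun_sub (((dH t ht).fun_pow 2).div_const 3)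
    refine HasDerivWithinAt.congr_of_mem (f := fun τ =>
      (((g τ)⁻¹ * k τ) * ((g τ)⁻¹ * k τ)).trace - meanCurv (g τ) (k τ) ^ 2 / 3) ?_
      (fun τ hτ => shear_sq (hdet τ hτ)) ht
    convert h using 1
    rw [shear_sq (hdet t ht), inv_mul_shear (hdet t ht)]
    simp only [Matrix.add_mul, Matrix.mul_add, Matrix.sub_mul, Matrix.mul_sub, Matrix.smul_mul,
      Matrix.mul_smul, Matrix.one_mul, Matrix.mul_one, Matrix.trace_sub, Matrix.trace_add,
      Matrix.trace_smul, smul_eq_mul, trace_inv_mul]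
    rw [Matrix.trace_mul_comm ((g t)⁻¹ * stress m f₀ (g t)) ((g t)⁻¹ * k t),
      Matrix.mul_assoc ((g t)⁻¹ * k t) (g t)⁻¹ (stress m f₀ (g t))]
    push_cast
    ring
  · have hQ : MDeriv (fun _ => moment f₀) 0 (Set.Ici t₀) t := fun i j =>
      hasDerivWithinAt_const _ _ _
    have h := ((hsol.dInv ht).mul hQ).trace.div_const (m ^ 2 * ∫ p, f₀ p)
    simpa [Matrix.smul_mul, Matrix.trace_smul] using h
  · rw [trace_mul_moment hf hc, trace_mul_moment hf hc, ← mul_div_assoc]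
    refine div_le_div_of_nonneg_right ?_ (by positivity)
    rw [mul_assoc (2 : ℝ)]
    refine mul_le_mul_of_nonneg_left ?_ zero_le_two
    rw [← integral_const_mul]
    refine integral_mono (integrable_mul hf hc (continuous_quad _))
      ((integrable_mul hf hc (continuous_quad _)).const_mul _) fun p => ?_
    have := mul_le_mul_of_nonneg_left (quad_k_le (hsol.g_posdef t ht) (hsol.g_symm t ht)
      (hsol.k_symm t ht) p) (h0 p)
    simp only
    linarith
  · rw [← hsol.constraint t ht, shear_sq (hdet t ht), ← Matrix.mul_assoc]
    ring
  · rw [trace_mul_moment hf hc]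
    exact div_nonneg (integral_nonneg fun p => mul_nonneg (h0 p)
      (quad_nonneg (hsol.g_posdef t ht) p)) (by positivity)
  · have hg := hsol.g_posdef t ht
    have hd := Real.sqrt_pos.2 hg.det_pos
    have hx : 0 ≤ ((g t)⁻¹ * moment f₀).trace / (m ^ 2 * ∫ p, f₀ p) := by
      rw [trace_mul_moment hf hc]
      exact div_nonneg (integral_nonneg fun p => mul_nonneg (h0 p) (quad_nonneg hg p))
        (by positivity)
    refine (pressure_le hm hf hc h0 hg).trans (le_trans (le_of_eq ?_)
      (mul_le_mul_of_nonneg_left (mass_le_energyDensity hf hc h0 hg) hx))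
    field_simp

/-- The decay estimate, under smallness conditions on the initial data that involve only `m`. -/
theorem momentumSup_bound (hsol : BianchiIVlasov t₀ m g k f₀)
    (hexp : meanCurv (g t₀) (k t₀) < 0) (hf₀ : f₀ ≠ 0)
    (hF : anisotropy (g t₀) (k t₀) ≤ 1 / 72) (hP : momentumSup f₀ (g t₀) ^ 2 ≤ m ^ 2 / 72)
    {b : ℝ} (hb0 : 0 ≤ b) (hb : b < 2 / 3) :
    ∃ C > (0 : ℝ), ∃ T ≥ t₀, 1 ≤ T ∧ ∀ t ≥ T, momentumSup f₀ (g t) ≤ C * t ^ (-b) := by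
  have hf := hsol.f₀_smooth.continuous
  have hc := hsol.f₀_cpt
  have h0 := hsol.f₀_nonneg
  have hN := mass_pos hf hc h0 hf₀
  have hm := hsol.m_pos
  have S := hsol.scalarSys hexp hf₀
  obtain ⟨T, hT, hdec⟩ := S.decay (a := 2 * b) (by
    have h1 := trace_moment_le hf hc h0 (hsol.g_posdef t₀ le_rfl)
    have h2 : ((g t₀)⁻¹ * moment f₀).trace / (m ^ 2 * ∫ p, f₀ p) ≤ 1 / 72 := by
      rw [div_le_iff₀ (by positivity)]
      have := mul_le_mul_of_nonneg_right hP hN.le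
      linarith
    have h3 : anisotropy (g t₀) (k t₀) ≤ 1 / 72 := hF
    rw [anisotropy] at h3
    linarith) (by linarith) (by linarith)
  -- the time `T` is common to all momenta, so the bound passes to their supremum
  set θ : ℝ → ℝ := fun t => (-meanCurv (g t) (k t))⁻¹ with hθ
  have hθpos : ∀ t ≥ t₀, 0 < θ t := fun t ht => inv_pos.2 (neg_pos.2 (S.H_neg t ht))
  set D : ℝ := momentumSup f₀ (g T) * θ T ^ b with hD
  have hD0 : 0 ≤ D := mul_nonneg momentumSup_nonneg (Real.rpow_nonneg (hθpos T hT).le _)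
  refine ⟨D * 4 ^ b + 1, by positivity, max (max T 1) (2 * T),
    hT.trans ((le_max_left _ _).trans (le_max_left _ _)),
    (le_max_right _ _).trans (le_max_left _ _), fun t ht => ?_⟩
  have htT : T ≤ t := (le_max_left _ _).trans ((le_max_left _ _).trans ht)
  have ht1 : 1 ≤ t := (le_max_right _ _).trans ((le_max_left _ _).trans ht)
  have ht2 : 2 * T ≤ t := (le_max_right _ _).trans ht
  have ht0 : 0 < t := by linarith
  have htt₀ := hT.trans htT
  have hθt : t / 4 ≤ θ t := le_trans (by linarith) (S.le_θ hT htT)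
  have hq : ∀ p, f₀ p ≠ 0 → Real.sqrt (p ⬝ᵥ (g t)⁻¹ *ᵥ p) * θ t ^ b ≤ D := by
    intro p hp
    have h := hdec (fun τ => p ⬝ᵥ (g τ)⁻¹ *ᵥ p)
      (fun τ => 2 * (p ⬝ᵥ ((g τ)⁻¹ * k τ * (g τ)⁻¹) *ᵥ p))
      (fun τ hτ => by
        simpa [Matrix.smul_mulVec, dotProduct_smul] using (hsol.dInv hτ).quad p)
      (fun τ hτ => quad_nonneg (hsol.g_posdef τ hτ) p)
      (fun τ hτ => by
        have := quad_k_le (hsol.g_posdef τ hτ) (hsol.g_symm τ hτ) (hsol.k_symm τ hτ) p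
        linarith) t htT
    have hsq : ∀ τ ≥ t₀, θ τ ^ (2 * b) = (θ τ ^ b) ^ 2 := fun τ hτ => by
      rw [mul_comm, Real.rpow_mul (hθpos τ hτ).le]; norm_cast
    have h' : (p ⬝ᵥ (g t)⁻¹ *ᵥ p) * θ t ^ (2 * b) ≤ (p ⬝ᵥ (g T)⁻¹ *ᵥ p) * θ T ^ (2 * b) := h
    rw [hsq t htt₀, hsq T hT] at h'
    refine le_of_sq_le_sq ?_ hD0
    rw [mul_pow, Real.sq_sqrt (quad_nonneg (hsol.g_posdef t htt₀) p), hD, mul_pow]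
    exact h'.trans (mul_le_mul_of_nonneg_right
      (quad_le_momentumSup hc (hsol.g_posdef T hT) hp) (sq_nonneg _))
  have ht4 : 0 < t ^ (-b) := Real.rpow_pos_of_pos ht0 _
  refine Real.sSup_le ?_ (by positivity)
  rintro _ ⟨p, hp, rfl⟩
  have h1 := hq p hp
  have h2 : (t / 4) ^ b ≤ θ t ^ b := Real.rpow_le_rpow (by positivity) hθt hb0
  have h3 : Real.sqrt (p ⬝ᵥ (g t)⁻¹ *ᵥ p) * (t / 4) ^ b ≤ D :=
    (mul_le_mul_of_nonneg_left h2 (Real.sqrt_nonneg _)).trans h1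
  rw [Real.div_rpow ht0.le (by norm_num), ← mul_div_assoc, div_le_iff₀ (by positivity),
    ← le_div_iff₀ (by positivity), div_eq_mul_inv, ← Real.rpow_neg ht0.le] at h3
  refine h3.trans ?_
  gcongr
  linarith

end BianchiIVlasov

/-- **Decay of the momenta.**
For a smooth expanding solution of the Bianchi I Einstein–Vlasov system with `f₀` not
identically zero, if the initial anisotropy `F(t₀)` and the initial momentum supremum
`P(t₀)` are sufficiently small, then for every `ε > 0` one has `P(t) = O(t^{-2/3+ε})`;
in particular `P(t) → 0`, so the solution is asymptotically dust-like. -/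
theorem momentumSup_late_time (t₀ m : ℝ) (g k : ℝ → Matrix (Fin 3) (Fin 3) ℝ)
    (f₀ : (Fin 3 → ℝ) → ℝ) (hsol : BianchiIVlasov t₀ m g k f₀)
    (hexp : meanCurv (g t₀) (k t₀) < 0) (hf₀ : f₀ ≠ 0) :
    ∃ ε₀ > (0 : ℝ),
      anisotropy (g t₀) (k t₀) ≤ ε₀ → momentumSup f₀ (g t₀) ≤ ε₀ →
        (∀ ε > (0 : ℝ), ∃ C > (0 : ℝ), ∃ T ≥ t₀, ∀ t ≥ T,
            momentumSup f₀ (g t) ≤ C * t ^ (-(2 : ℝ) / 3 + ε)) ∧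
          Filter.Tendsto (fun t => momentumSup f₀ (g t)) Filter.atTop (nhds 0) := by
  have hm := hsol.m_pos
  -- this threshold depends on the solution only through the particle mass
  refine ⟨min (1 / 72) (m / 9), by positivity, fun hF hP => ?_⟩
  have hF' := hF.trans (min_le_left _ _)
  have hP' : momentumSup f₀ (g t₀) ^ 2 ≤ m ^ 2 / 72 := by
    have := pow_le_pow_left₀ momentumSup_nonneg (hP.trans (min_le_right _ _)) 2
    nlinarith
  refine ⟨fun ε hε => ?_, ?_⟩
  · obtain ⟨C, hC, T, hT, hT1, h⟩ := hsol.momentumSup_bound hexp hf₀ hF' hP'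
      (b := 2 / 3 - min ε (2 / 3)) (by linarith [min_le_right ε (2 / 3)])
      (by linarith [lt_min hε (by norm_num : (0 : ℝ) < 2 / 3)])
    refine ⟨C, hC, T, hT, fun t ht => (h t ht).trans ?_⟩
    gcongr
    · exact hT1.trans ht
    · linarith [min_le_left ε (2 / 3)]
  · obtain ⟨C, hC, T, hT, hT1, h⟩ := hsol.momentumSup_bound hexp hf₀ hF' hP'
      (b := 1 / 3) (by norm_num) (by norm_num)
    have hlim : Filter.Tendsto (fun t : ℝ => C * t ^ (-(1 / 3) : ℝ)) Filter.atTop (nhds 0) := by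
      simpa using (tendsto_rpow_neg_atTop (by norm_num : (0 : ℝ) < 1 / 3)).const_mul C
    refine squeeze_zero' (Filter.Eventually.of_forall fun t => momentumSup_nonneg) ?_ hlim
    filter_upwards [Filter.eventually_ge_atTop T] with t ht using h t ht
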